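/- Let X be a simplicial surface. Then the following are equivalent: (a) Aut(X) acts transitively on the edges X_1, has exactly one orbit on the faces X_2, and the stabiliser in Aut(X) of every edge has order 2; (b) Aut(X) acts transitively on the faces X_2, has exactly one orbit on the vertices X_0, and the stabiliser in Aut(X) of every face has order 3. -/

import Mathlib

open Finset

/-- A (connected) simplicial surface: a finite, downward-closed family of nonempty subsets of
the vertex set `α`, pure of dimension 2, such that every edge lies in exactly two faces,
the faces around each vertex form an umbrella, and the surface is connected. -/
structure SimplicialSurface (α : Type*) [Fintype α] [DecidableEq α] where
  cplx : Finset (Finset α)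
  nonempty_of_mem : ∀ s ∈ cplx, s.Nonempty
  down_closed : ∀ s ∈ cplx, ∀ t : Finset α, t.Nonempty → t ⊆ s → t ∈ cplx
  card_le_three : ∀ s ∈ cplx, s.card ≤ 3
  pure_two : ∀ s ∈ cplx, ∃ F ∈ cplx, s ⊆ F ∧ F.card = 3
  dim_two : ∃ F ∈ cplx, F.card = 3
  all_vertices : ∀ x : α, {x} ∈ cplx
  edge_in_two_faces : ∀ e ∈ cplx, e.card = 2 →
    (cplx.filter (fun F => e ⊆ F ∧ F.card = 3)).card = 2
  umbrella_exists : ∀ v : α, ∃ n : ℕ, 0 < n ∧ ∃ u : Fin n → Finset α,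
    Function.Injective u ∧
    (∀ i, u i ∈ cplx ∧ (u i).card = 3 ∧ v ∈ u i) ∧
    (∀ F ∈ cplx, F.card = 3 → v ∈ F → ∃ i, u i = F) ∧
    (∀ i : Fin n, (u i ∩ u (finRotate n i)).card = 2)
  connected : ∀ F ∈ cplx, ∀ G ∈ cplx, F.card = 3 → G.card = 3 →
    Relation.ReflTransGen (fun A B => A ∈ cplx ∧ B ∈ cplx ∧ (A ∩ B).card = 2) F G

lemma Equiv.Perm.finset_image_mul {α : Type*} [DecidableEq α] (π σ : Equiv.Perm α)
    (s : Finset α) :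
    Finset.image ⇑(π * σ) s = Finset.image ⇑π (Finset.image ⇑σ s) := by
  rw [Finset.image_image]
  rfl

namespace SimplicialSurface

variable {α : Type*} [Fintype α] [DecidableEq α] (X : SimplicialSurface α)

/-- The set `X_2` of faces of `X`, i.e. the 3-element members. -/
def faces : Finset (Finset α) := X.cplx.filter fun s => s.card = 3

/-- The set `X_1` of edges of `X`, i.e. the 2-element members. -/
def edges : Finset (Finset α) := X.cplx.filter fun s => s.card = 2

/-- The automorphism group of `X`: permutations of the vertices mapping members of the
complex to members of the complex. -/
def aut : Subgroup (Equiv.Perm α) where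
  carrier := { π | ∀ s : Finset α, s ∈ X.cplx ↔ Finset.image ⇑π s ∈ X.cplx }
  one_mem' := by intro s; simp
  mul_mem' := by
    intro π σ hπ hσ s
    rw [Equiv.Perm.finset_image_mul, ← hπ (Finset.image ⇑σ s), ← hσ s]
  inv_mem' := by
    intro π hπ s
    have h2 : Finset.image ⇑π (Finset.image ⇑π⁻¹ s) = s := by ext x; simp
    have h := hπ (Finset.image ⇑π⁻¹ s)
    rw [h2] at h
    exact h.symm

/-- The setwise stabiliser in `Aut(X)` of a set `s` of vertices. -/
def stab (s : Finset α) : Subgroup (Equiv.Perm α) where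
  carrier := { π | π ∈ X.aut ∧ Finset.image ⇑π s = s }
  one_mem' := ⟨X.aut.one_mem, by simp⟩
  mul_mem' := by
    rintro π σ ⟨hπ, hπs⟩ ⟨hσ, hσs⟩
    exact ⟨X.aut.mul_mem hπ hσ, by rw [Equiv.Perm.finset_image_mul, hσs, hπs]⟩
  inv_mem' := by
    rintro π ⟨hπ, hπs⟩
    refine ⟨X.aut.inv_mem hπ, ?_⟩
    calc Finset.image ⇑π⁻¹ s = Finset.image ⇑π⁻¹ (Finset.image ⇑π s) := by rw [hπs]
      _ = s := by ext x; simp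

/-- `X` is edge-transitive if `Aut(X)` acts transitively on the edges `X_1`. -/
def EdgeTransitive : Prop :=
  ∀ e₁ ∈ X.edges, ∀ e₂ ∈ X.edges, ∃ π ∈ X.aut, Finset.image ⇑π e₁ = e₂

/-- The orbit of a set of vertices under `Aut(X)`. -/
def orbit (s : Finset α) : Set (Finset α) := { t | ∃ π ∈ X.aut, Finset.image ⇑π s = t }

/-- The set of `Aut(X)`-orbits on the faces of `X`. -/
def faceOrbits : Set (Set (Finset α)) := { O | ∃ F ∈ X.faces, O = X.orbit F }

/-- The set of `Aut(X)`-orbits on the vertices of `X`. -/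
def vertexOrbits : Set (Set α) := { O | ∃ v : α, O = { w | ∃ π ∈ X.aut, π v = w } }

/-- The degree of a vertex: the number of faces containing it. -/
def degree (v : α) : ℕ := (X.faces.filter fun F => v ∈ F).card

end SimplicialSurface

/-!
An automorphism fixing a face pointwise also fixes the third vertex of every neighbouring face, so
by connectedness it is trivial: the stabiliser of a face acts faithfully on its three vertices. Once
that stabiliser has order 3, it therefore permutes these vertices cyclically, so face-transitivity
gives both vertex-transitivity and edge-transitivity. The two orders determine each other because
`|faces| * |Stab F| = |Aut X| = |edges| * |Stab e|` while `3 * |faces| = 2 * |edges|`.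
-/

lemma apply_eq_self_of_card_sdiff_le_one {β : Type*} [DecidableEq β] {f : β → β}
    (hf : Function.Injective f) {s t : Finset β} (hst : #(t \ s) ≤ 1)
    (hmaps : ∀ x ∈ t, f x ∈ t) (hfix : ∀ x ∈ s, f x = x) : ∀ x ∈ t, f x = x := by
  intro x hx
  by_cases hxs : x ∈ s
  · exact hfix x hxs
  · have hfxs : f x ∉ s := fun h => hxs (hf (hfix (f x) h) ▸ h)
    exact card_le_one.1 hst (f x) (mem_sdiff.2 ⟨hmaps x hx, hfxs⟩) x (mem_sdiff.2 ⟨hx, hxs⟩)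

lemma isPretransitive_of_prime_dvd_card {G β : Type*} [Group G] [MulAction G β]
    [FaithfulSMul G β] {p : ℕ} (hp : p.Prime) (hβ : Nat.card β = p) (hG : p ∣ Nat.card G) :
    MulAction.IsPretransitive G β := by
  classical
  have : Fact p.Prime := ⟨hp⟩
  have : Finite β := Nat.finite_of_card_ne_zero (hβ ▸ hp.ne_zero)
  have : Fintype β := Fintype.ofFinite β
  have : Finite G := Finite.of_injective _ (MulAction.toPerm_injective (α := G) (β := β))
  rw [Nat.card_eq_fintype_card] at hβ
  obtain ⟨g, hg⟩ := exists_prime_orderOf_dvd_card' p hG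
  let σ := MulAction.toPermHom G β g
  have horder : orderOf σ = Fintype.card β := by
    rw [orderOf_injective (MulAction.toPermHom G β) MulAction.toPerm_injective, hg, hβ]
  have hcycle : σ.IsCycle := Equiv.Perm.isCycle_of_prime_order'' (hβ ▸ hp) horder
  have hmoved (x : β) : σ x ≠ x := by
    have hsupport : σ.support = univ := (card_eq_iff_eq_univ _).1 (hcycle.orderOf ▸ horder)
    exact Equiv.Perm.mem_support.1 (hsupport ▸ mem_univ x)
  refine ⟨fun x y => ?_⟩
  obtain ⟨n, hn⟩ := hcycle.exists_zpow_eq (hmoved x) (hmoved y)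
  exact ⟨g ^ n, by rw [← hn, ← map_zpow]; rfl⟩

namespace SimplicialSurface

variable {α : Type*} [Fintype α] [DecidableEq α] (X : SimplicialSurface α)

/-- Transitivity of `Aut(X)` on the faces `X_2`, the analogue of `EdgeTransitive`. -/
def FaceTransitive : Prop :=
  ∀ F ∈ X.faces, ∀ G ∈ X.faces, ∃ π ∈ X.aut, image ⇑π F = G

section Incidence

variable {X}

lemma mem_faces {s : Finset α} : s ∈ X.faces ↔ s ∈ X.cplx ∧ #s = 3 := mem_filter

lemma mem_edges {s : Finset α} : s ∈ X.edges ↔ s ∈ X.cplx ∧ #s = 2 := mem_filter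

lemma exists_face_superset {s : Finset α} (hs : s ∈ X.cplx) : ∃ F ∈ X.faces, s ⊆ F := by
  obtain ⟨F, hF, hsF, hcard⟩ := X.pure_two s hs
  exact ⟨F, mem_faces.2 ⟨hF, hcard⟩, hsF⟩

lemma mem_edges_of_subset_face {F e : Finset α} (hF : F ∈ X.faces) (heF : e ⊆ F)
    (he : #e = 2) : e ∈ X.edges :=
  mem_edges.2 ⟨X.down_closed F (mem_faces.1 hF).1 e (card_pos.1 (by omega)) heF, he⟩

lemma card_edges_of_face {F : Finset α} (hF : F ∈ X.faces) :
    #{e ∈ X.edges | e ⊆ F} = 3 := by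
  have hedges : {e ∈ X.edges | e ⊆ F} = powersetCard 2 F := by
    ext e
    rw [mem_filter, mem_powersetCard]
    exact ⟨fun ⟨he, heF⟩ => ⟨heF, (mem_edges.1 he).2⟩,
      fun ⟨heF, he⟩ => ⟨mem_edges_of_subset_face hF heF he, heF⟩⟩
  rw [hedges, card_powersetCard, (mem_faces.1 hF).2]
  rfl

lemma card_faces_of_edge {e : Finset α} (he : e ∈ X.edges) :
    #{F ∈ X.faces | e ⊆ F} = 2 := by
  rw [← X.edge_in_two_faces e (mem_edges.1 he).1 (mem_edges.1 he).2, faces, filter_filter]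
  simp only [and_comm]

variable (X)

lemma exists_mem_faces (v : α) : ∃ F ∈ X.faces, v ∈ F := by
  obtain ⟨F, hF, hvF⟩ := exists_face_superset (X.all_vertices v)
  exact ⟨F, hF, singleton_subset_iff.1 hvF⟩

lemma faces_nonempty : X.faces.Nonempty := by
  obtain ⟨F, hF⟩ := X.dim_two
  exact ⟨F, mem_faces.2 hF⟩

lemma card_faces_mul_three : #X.faces * 3 = #X.edges * 2 :=
  card_mul_eq_card_mul (fun F e : Finset α => e ⊆ F) (fun _ hF => card_edges_of_face hF)
    fun _ he => card_faces_of_edge he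

lemma edges_nonempty : X.edges.Nonempty := by
  have hcount := X.card_faces_mul_three
  have hfaces := X.faces_nonempty.card_pos
  exact card_pos.1 (by omega)

variable {X}

@[elab_as_elim]
lemma face_induction {P : Finset α → Prop} {F : Finset α} (hF : F ∈ X.faces) (base : P F)
    (step : ∀ A ∈ X.faces, ∀ B ∈ X.faces, ∀ e ∈ X.edges, e ⊆ A → e ⊆ B → P A → P B)
    {G : Finset α} (hG : G ∈ X.faces) : P G := by
  -- The path from `F` to `G` may pass through edges, so the induction runs over the faces
  -- containing the current member of the path.
  suffices h : ∀ H ∈ X.faces, G ⊆ H → P H from h G hG Subset.rfl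
  have hpath := X.connected F (mem_faces.1 hF).1 G (mem_faces.1 hG).1 (mem_faces.1 hF).2
    (mem_faces.1 hG).2
  clear hG
  induction hpath with
  | refl =>
    intro H hH hFH
    have hcard : #H ≤ #F := by rw [(mem_faces.1 hH).2, (mem_faces.1 hF).2]
    exact eq_of_subset_of_card_le hFH hcard ▸ base
  | @tail A B _ hAB ih =>
    intro H hH hBH
    obtain ⟨hA, -, hcard⟩ := hAB
    obtain ⟨K, hK, hAK⟩ := exists_face_superset hA
    have hAH : A ∩ B ⊆ H := inter_subset_right.trans hBH
    exact step K hK H hH (A ∩ B) (mem_edges_of_subset_face hH hAH hcard)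
      (inter_subset_left.trans hAK) hAH (ih K hK hAK)

end Incidence

section Automorphisms

variable {X} {π : Equiv.Perm α}

lemma image_mem_faces (hπ : π ∈ X.aut) {F : Finset α} (hF : F ∈ X.faces) :
    image ⇑π F ∈ X.faces := by
  rw [mem_faces, ← hπ F, card_image_of_injective F π.injective]
  exact mem_faces.1 hF

lemma image_mem_edges (hπ : π ∈ X.aut) {e : Finset α} (he : e ∈ X.edges) :
    image ⇑π e ∈ X.edges := by
  rw [mem_edges, ← hπ e, card_image_of_injective e π.injective]
  exact mem_edges.1 he

lemma image_eq_self_of_adjacent (hπ : π ∈ X.aut) {e A B : Finset α} (he : e ∈ X.edges)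
    (hA : A ∈ X.faces) (hB : B ∈ X.faces) (heA : e ⊆ A) (heB : e ⊆ B)
    (hπe : image ⇑π e = e) (hπA : image ⇑π A = A) : image ⇑π B = B := by
  have hrest : #({F ∈ X.faces | e ⊆ F} \ {A}) ≤ 1 := by
    rw [card_sdiff_of_subset (singleton_subset_iff.2 (mem_filter.2 ⟨hA, heA⟩)),
      card_faces_of_edge he, card_singleton]
  refine apply_eq_self_of_card_sdiff_le_one (image_injective π.injective) hrest ?_
    (by simpa only [mem_singleton, forall_eq] using hπA) B (mem_filter.2 ⟨hB, heB⟩)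
  intro F hF
  obtain ⟨hF, heF⟩ := mem_filter.1 hF
  exact mem_filter.2 ⟨image_mem_faces hπ hF, hπe ▸ image_subset_image heF⟩

lemma fixes_face_of_adjacent (hπ : π ∈ X.aut) {e A B : Finset α} (he : e ∈ X.edges)
    (hA : A ∈ X.faces) (hB : B ∈ X.faces) (heA : e ⊆ A) (heB : e ⊆ B)
    (hfix : ∀ x ∈ A, π x = x) : ∀ x ∈ B, π x = x := by
  have himage {s : Finset α} (hs : s ⊆ A) : image ⇑π s = s :=
    (image_congr fun x hx => hfix x (hs hx)).trans image_id
  have hπB := image_eq_self_of_adjacent hπ he hA hB heA heB (himage heA) (himage Subset.rfl)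
  have hrest : #(B \ e) ≤ 1 := by
    rw [card_sdiff_of_subset heB, (mem_faces.1 hB).2, (mem_edges.1 he).2]
  exact apply_eq_self_of_card_sdiff_le_one π.injective hrest
    (fun x hx => hπB ▸ mem_image_of_mem π hx) fun x hx => hfix x (heA hx)

lemma eq_one_of_fixes_face (hπ : π ∈ X.aut) {F : Finset α} (hF : F ∈ X.faces)
    (hfix : ∀ x ∈ F, π x = x) : π = 1 := by
  ext x
  obtain ⟨G, hG, hxG⟩ := X.exists_mem_faces x
  exact face_induction (P := fun H => ∀ x ∈ H, π x = x) hF hfix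
    (fun A hA B hB e he heA heB => fixes_face_of_adjacent hπ he hA hB heA heB) hG x hxG

end Automorphisms

section FaceStabiliser

/-- The set `s` of vertices with the action of its own setwise stabiliser. -/
def stabSubMulAction (s : Finset α) : SubMulAction (X.stab s) α where
  carrier := s
  smul_mem' g x hx := by
    have hgx := mem_image_of_mem g.1 (mem_coe.1 hx)
    rwa [g.2.2] at hgx

variable {X} {F : Finset α}

lemma faithfulSMul_stabSubMulAction (hF : F ∈ X.faces) :
    FaithfulSMul (X.stab F) (X.stabSubMulAction F) := by
  refine ⟨fun {g h} hgh => ?_⟩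
  have hfix : ∀ x ∈ F, (g⁻¹ * h).1 x = x := fun x hx =>
    (Equiv.Perm.inv_eq_iff_eq).2 (congrArg Subtype.val (hgh ⟨x, hx⟩)).symm
  exact inv_mul_eq_one.1 (Subtype.ext (eq_one_of_fixes_face (g⁻¹ * h).2.1 hF hfix))

lemma exists_mem_stab_apply_eq (hF : F ∈ X.faces) (hstab : 3 ∣ Nat.card (X.stab F)) {v w : α}
    (hv : v ∈ F) (hw : w ∈ F) : ∃ π ∈ X.stab F, π v = w := by
  have := faithfulSMul_stabSubMulAction hF
  have hcard : Nat.card (X.stabSubMulAction F) = 3 :=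
    (Set.ncard_coe_finset F).trans (mem_faces.1 hF).2
  have := isPretransitive_of_prime_dvd_card Nat.prime_three hcard hstab
  obtain ⟨⟨π, hπ⟩, hvw⟩ := MulAction.exists_smul_eq (X.stab F)
    (⟨v, hv⟩ : X.stabSubMulAction F) ⟨w, hw⟩
  exact ⟨π, hπ, congrArg Subtype.val hvw⟩

lemma exists_mem_stab_image_eq (hF : F ∈ X.faces) (hstab : 3 ∣ Nat.card (X.stab F))
    {d e : Finset α} (hdF : d ⊆ F) (hd : #d = 2) (heF : e ⊆ F) (he : #e = 2) :
    ∃ π ∈ X.stab F, image ⇑π d = e := by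
  have herase {c : Finset α} (hcF : c ⊆ F) (hc : #c = 2) : ∃ x ∈ F, F.erase x = c :=
    covBy_iff_exists_erase.1 (covBy_iff_card_sdiff_eq_one.2
      ⟨hcF, by rw [card_sdiff_of_subset hcF, (mem_faces.1 hF).2, hc]⟩)
  obtain ⟨v, hv, rfl⟩ := herase hdF hd
  obtain ⟨w, hw, rfl⟩ := herase heF he
  obtain ⟨π, hπ, rfl⟩ := exists_mem_stab_apply_eq hF hstab hv hw
  exact ⟨π, hπ, by rw [image_erase π.injective, hπ.2]⟩

end FaceStabiliser

section Transitivity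

variable {X}

lemma FaceTransitive.exists_apply_eq (h : X.FaceTransitive)
    (hstab : ∀ F ∈ X.faces, 3 ∣ Nat.card (X.stab F)) (v w : α) : ∃ π ∈ X.aut, π v = w := by
  obtain ⟨F, hF, hvF⟩ := X.exists_mem_faces v
  obtain ⟨G, hG, hwG⟩ := X.exists_mem_faces w
  obtain ⟨σ, hσ, rfl⟩ := h F hF G hG
  obtain ⟨τ, hτ, hτw⟩ := exists_mem_stab_apply_eq hG (hstab _ hG) (mem_image_of_mem σ hvF) hwG
  exact ⟨τ * σ, X.aut.mul_mem hτ.1 hσ, hτw⟩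

lemma FaceTransitive.edgeTransitive (h : X.FaceTransitive)
    (hstab : ∀ F ∈ X.faces, 3 ∣ Nat.card (X.stab F)) : X.EdgeTransitive := by
  intro d hd e he
  obtain ⟨F, hF, hdF⟩ := exists_face_superset (mem_edges.1 hd).1
  obtain ⟨G, hG, heG⟩ := exists_face_superset (mem_edges.1 he).1
  obtain ⟨σ, hσ, rfl⟩ := h F hF G hG
  obtain ⟨τ, hτ, hτe⟩ := exists_mem_stab_image_eq hG (hstab _ hG) (image_subset_image hdF)
    (mem_edges.1 (image_mem_edges hσ hd)).2 heG (mem_edges.1 he).2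
  exact ⟨τ * σ, X.aut.mul_mem hτ.1 hσ, by rw [Equiv.Perm.finset_image_mul, hτe]⟩

lemma FaceTransitive.vertexOrbits_ncard_eq_one (h : X.FaceTransitive)
    (hstab : ∀ F ∈ X.faces, 3 ∣ Nat.card (X.stab F)) : X.vertexOrbits.ncard = 1 := by
  have horbit (v : α) : {w | ∃ π ∈ X.aut, π v = w} = Set.univ :=
    Set.eq_univ_of_forall (h.exists_apply_eq hstab v)
  obtain ⟨F, hF⟩ := X.dim_two
  obtain ⟨v, -⟩ := X.nonempty_of_mem F hF.1
  refine Set.ncard_eq_one.2 ⟨Set.univ, Set.eq_singleton_iff_unique_mem.2 ⟨?_, ?_⟩⟩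
  · exact ⟨v, (horbit v).symm⟩
  · rintro _ ⟨w, rfl⟩
    exact horbit w

lemma FaceTransitive.orbit_eq (h : X.FaceTransitive) {F : Finset α} (hF : F ∈ X.faces) :
    X.orbit F = X.faces := by
  refine Set.Subset.antisymm ?_ (h F hF)
  rintro _ ⟨π, hπ, rfl⟩
  exact image_mem_faces hπ hF

lemma EdgeTransitive.orbit_eq (h : X.EdgeTransitive) {e : Finset α} (he : e ∈ X.edges) :
    X.orbit e = X.edges := by
  refine Set.Subset.antisymm ?_ (h e he)
  rintro _ ⟨π, hπ, rfl⟩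
  exact image_mem_edges hπ he

variable (X) in
lemma mem_orbit_self (s : Finset α) : s ∈ X.orbit s := ⟨1, X.aut.one_mem, image_id⟩

variable (X) in
lemma faceOrbits_ncard_eq_one_iff : X.faceOrbits.ncard = 1 ↔ X.FaceTransitive := by
  constructor
  · intro h F hF G hG
    obtain ⟨O, hO⟩ := Set.ncard_eq_one.1 h
    have horbit {H : Finset α} (hH : H ∈ X.faces) : X.orbit H = O :=
      Set.eq_of_mem_singleton (hO ▸ ⟨H, hH, rfl⟩)
    have hGF : G ∈ X.orbit F := by
      rw [horbit hF, ← horbit hG]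
      exact X.mem_orbit_self G
    exact hGF
  · intro h
    obtain ⟨F, hF⟩ := X.faces_nonempty
    refine Set.ncard_eq_one.2 ⟨X.faces, Set.eq_singleton_iff_unique_mem.2 ⟨?_, ?_⟩⟩
    · exact ⟨F, hF, (h.orbit_eq hF).symm⟩
    · rintro _ ⟨G, hG, rfl⟩
      exact h.orbit_eq hG

end Transitivity

section OrbitStabiliser

open scoped Pointwise in
lemma ncard_orbit_mul_card_stab (s : Finset α) :
    (X.orbit s).ncard * Nat.card (X.stab s) = Nat.card X.aut := by
  have horbit : X.orbit s = MulAction.orbit X.aut s := by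
    ext t
    exact ⟨fun ⟨π, hπ, hst⟩ => ⟨⟨π, hπ⟩, hst⟩, fun ⟨π, hst⟩ => ⟨π.1, π.2, hst⟩⟩
  have hstab : (X.stab s).subgroupOf X.aut = MulAction.stabilizer X.aut s := by
    ext π
    exact ⟨fun h => h.2, fun h => ⟨π.2, h⟩⟩
  have hle : X.stab s ≤ X.aut := fun _ hπ => hπ.1
  rw [horbit, ← MulAction.index_stabilizer, ← hstab,
    ← Nat.card_congr (Subgroup.subgroupOfEquivOfLe hle).toEquiv, Subgroup.index_mul_card]

variable {X}

lemma FaceTransitive.two_mul_card_stab_face (hF : X.FaceTransitive) (hE : X.EdgeTransitive)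
    {F e : Finset α} (hFX : F ∈ X.faces) (heX : e ∈ X.edges) :
    2 * Nat.card (X.stab F) = 3 * Nat.card (X.stab e) := by
  have hfaces := X.ncard_orbit_mul_card_stab F
  have hedges := X.ncard_orbit_mul_card_stab e
  rw [hF.orbit_eq hFX, Set.ncard_coe_finset] at hfaces
  rw [hE.orbit_eq heX, Set.ncard_coe_finset] at hedges
  refine Nat.eq_of_mul_eq_mul_left X.edges_nonempty.card_pos ?_
  calc #X.edges * (2 * Nat.card (X.stab F))
      = #X.faces * 3 * Nat.card (X.stab F) := by rw [X.card_faces_mul_three, mul_assoc]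
    _ = 3 * (#X.faces * Nat.card (X.stab F)) := by ring
    _ = 3 * (#X.edges * Nat.card (X.stab e)) := by rw [hfaces, hedges]
    _ = #X.edges * (3 * Nat.card (X.stab e)) := by ring

end OrbitStabiliser

end SimplicialSurface

/-- A simplicial surface `X` is edge-transitive with exactly one face orbit and edge
stabilisers of order `2` if and only if it is face-transitive with exactly one vertex orbit
and face stabilisers of order `3`. -/
theorem fe_one_two_iff_vf_one_three
    {α : Type*} [Fintype α] [DecidableEq α] (X : SimplicialSurface α) :
    (X.EdgeTransitive ∧ X.faceOrbits.ncard = 1 ∧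
        ∀ e ∈ X.edges, Nat.card (X.stab e) = 2) ↔
      ((∀ F ∈ X.faces, ∀ G ∈ X.faces, ∃ π ∈ X.aut, Finset.image ⇑π F = G) ∧
        X.vertexOrbits.ncard = 1 ∧
        ∀ F ∈ X.faces, Nat.card (X.stab F) = 3) := by
  constructor
  · rintro ⟨hE, horbits, hstab⟩
    have hF : X.FaceTransitive := X.faceOrbits_ncard_eq_one_iff.1 horbits
    have hthree : ∀ F ∈ X.faces, Nat.card (X.stab F) = 3 := by
      intro F hFX
      obtain ⟨e, heX⟩ := X.edges_nonempty
      have horders := hF.two_mul_card_stab_face hE hFX heX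
      have htwo := hstab e heX
      omega
    exact ⟨hF, hF.vertexOrbits_ncard_eq_one fun F hFX => (hthree F hFX).symm.dvd, hthree⟩
  · rintro ⟨(hF : X.FaceTransitive), -, hstab⟩
    have hE : X.EdgeTransitive := hF.edgeTransitive fun F hFX => (hstab F hFX).symm.dvd
    refine ⟨hE, X.faceOrbits_ncard_eq_one_iff.2 hF, fun e heX => ?_⟩
    obtain ⟨F, hFX⟩ := X.faces_nonempty
    have horders := hF.two_mul_card_stab_face hE hFX heX
    have hthree := hstab F hFX
    omega
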